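/- arXiv:2501.19193 — 2 statements merged into one kernel-verified Lean document; each statement's English description precedes it below -/
import Mathlib

section
/- Let n ∈ ℝ_{>0}, p ∈ ℝ², k ≥ 2 a real number, and let Λ ⊇ ℤ² be a superlattice of ℤ². For i ∈ ℤ define r_i := (k^i, n/k^i), R_i := [k^i, k^{i+1}] × [n/k^{i+1}, n/k^i], and U_i := r_i + [0,1]². Then for every vertex q of conv(H_n ∩ (p+Λ)) other than the vertex of smallest x-coordinate and the vertex of smallest y-coordinate, there exists i ∈ ℤ with ⌊log_k(det Λ)⌋ ≤ i ≤ ⌊log_k(n/det Λ + 1)⌋ such that q ∈ R_i or q ∈ U_i. -/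
noncomputable section

/-- The closed region on and above the positive branch of the hyperbola `x*y = n`. -/
def Hset (n : ℝ) : Set (ℝ × ℝ) := {q | 0 ≤ q.1 ∧ 0 ≤ q.2 ∧ n ≤ q.1 * q.2}

/-- The integer lattice `ℤ² ⊂ ℝ²`. -/
def intLattice : Set (ℝ × ℝ) := {q | ∃ a b : ℤ, q = ((a : ℝ), (b : ℝ))}

/-- The lattice generated by two vectors `v, w`. -/
def latticeOf (v w : ℝ × ℝ) : Set (ℝ × ℝ) :=
  {q | ∃ a b : ℤ, q = (a : ℝ) • v + (b : ℝ) • w}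

/-- The covolume (absolute determinant) of the lattice with basis `v, w`. -/
def detOf (v w : ℝ × ℝ) : ℝ := |v.1 * w.2 - v.2 * w.1|

/-- The translate `p + S` of a set `S ⊆ ℝ²`. -/
def translateSet (p : ℝ × ℝ) (S : Set (ℝ × ℝ)) : Set (ℝ × ℝ) := (fun q => p + q) '' S

/-!
Since `ℤ² ⊆ Λ`, the points `q ± (1, 0)` and `q ± (0, 1)` lie in `p + Λ`, and those with the plus
sign lie in `H_n`. A vertex `q = (x, y)` is not a midpoint, so the other two are outside `H_n`,
i.e. `(x - 1) y < n` and `x (y - 1) < n`. Let `i = ⌊log_k x⌋`. If `q` lies below the top edge of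
`R_i`, then `q ∈ R_i`; otherwise the two inequalities force `q ∈ U_i`.

For the range of `i`, note that `u.1` and `u.2` are, up to sign, the determinants of `u ∈ Λ` with
`(0, 1)` and `(1, 0)`, hence integer multiples of `d = det Λ`. A point of `H_n ∩ (p + Λ)` to the
left of `q` thus gives `d ≤ x` and one below `q` gives `d ≤ y`, whence `x < n / y + 1 ≤ n / d + 1`.
-/

lemma eq_zero_of_mem_extremePoints_convexHull {𝕜 E : Type*} [Ring 𝕜] [LinearOrder 𝕜]
    [IsStrictOrderedRing 𝕜] [Invertible (2 : 𝕜)] [AddCommGroup E] [Module 𝕜 E] {S : Set E}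
    {q e : E} (hq : q ∈ (convexHull 𝕜 S).extremePoints 𝕜) (hadd : q + e ∈ S)
    (hsub : q - e ∈ S) : e = 0 :=
  add_eq_left.mp <| hq.2 (subset_convexHull 𝕜 S hadd) (subset_convexHull 𝕜 S hsub)
    (mem_openSegment_add_sub q e)

section TranslatedLattice

variable {Λ : AddSubgroup (ℝ × ℝ)} {p q q' e : ℝ × ℝ}

lemma mem_translateSet_iff {S : Set (ℝ × ℝ)} : q ∈ translateSet p S ↔ q - p ∈ S := by
  simp [translateSet, neg_add_eq_sub]

lemma add_mem_translateSet (hq : q ∈ translateSet p Λ) (he : e ∈ Λ) :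
    q + e ∈ translateSet p Λ := by
  rw [mem_translateSet_iff, add_sub_right_comm]
  exact add_mem (mem_translateSet_iff.mp hq) he

lemma sub_mem_of_mem_translateSet (hq : q ∈ translateSet p Λ) (hq' : q' ∈ translateSet p Λ) :
    q - q' ∈ Λ := by
  rw [← sub_sub_sub_cancel_right q q' p]
  exact sub_mem (mem_translateSet_iff.mp hq) (mem_translateSet_iff.mp hq')

lemma sub_notMem_of_mem_extremePoints {U : Set (ℝ × ℝ)} (hU : IsUpperSet U)
    (hq : q ∈ (convexHull ℝ (U ∩ translateSet p Λ)).extremePoints ℝ)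
    (he : e ∈ Λ) (hpos : 0 < e) : q - e ∉ U := by
  intro hsubU
  obtain ⟨hqU, hqΛ⟩ := extremePoints_convexHull_subset hq
  have hadd : q + e ∈ U ∩ translateSet p Λ :=
    ⟨hU (le_add_of_nonneg_right hpos.le) hqU, add_mem_translateSet hqΛ he⟩
  have hsub : q - e ∈ U ∩ translateSet p Λ :=
    ⟨hsubU, sub_eq_add_neg q e ▸ add_mem_translateSet hqΛ (neg_mem he)⟩
  exact hpos.ne' (eq_zero_of_mem_extremePoints_convexHull hq hadd hsub)

end TranslatedLattice

section Hyperbola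

variable {n : ℝ} {p q : ℝ × ℝ} {Λ : AddSubgroup (ℝ × ℝ)}

lemma isUpperSet_Hset (n : ℝ) : IsUpperSet (Hset n) := fun _ _ hab ⟨hx, hy, hxy⟩ =>
  ⟨hx.trans hab.1, hy.trans hab.2, hxy.trans (mul_le_mul hab.1 hab.2 hy (hx.trans hab.1))⟩

lemma pos_of_mem_Hset (hn : 0 < n) (hq : q ∈ Hset n) : 0 < q.1 ∧ 0 < q.2 := by
  obtain ⟨hx, hy, hxy⟩ := hq
  have hmul : 0 < q.1 * q.2 := hn.trans_le hxy
  exact ⟨pos_of_mul_pos_left hmul hy, pos_of_mul_pos_right hmul hx⟩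

lemma sub_one_mul_lt_of_mem_extremePoints (hn : 0 < n) (hΛ : ((1, 0) : ℝ × ℝ) ∈ Λ)
    (hq : q ∈ (convexHull ℝ (Hset n ∩ translateSet p Λ)).extremePoints ℝ) :
    (q.1 - 1) * q.2 < n := by
  obtain ⟨-, hy⟩ := pos_of_mem_Hset hn (extremePoints_convexHull_subset hq).1
  by_contra! hle
  refine sub_notMem_of_mem_extremePoints (isUpperSet_Hset n) hq hΛ (by simp [Prod.lt_iff])
    ⟨?_, by simpa using hy.le, by simpa using hle⟩
  exact (pos_of_mul_pos_left (hn.trans_le hle) hy.le).le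

lemma mul_sub_one_lt_of_mem_extremePoints (hn : 0 < n) (hΛ : ((0, 1) : ℝ × ℝ) ∈ Λ)
    (hq : q ∈ (convexHull ℝ (Hset n ∩ translateSet p Λ)).extremePoints ℝ) :
    q.1 * (q.2 - 1) < n := by
  obtain ⟨hx, -⟩ := pos_of_mem_Hset hn (extremePoints_convexHull_subset hq).1
  by_contra! hle
  refine sub_notMem_of_mem_extremePoints (isUpperSet_Hset n) hq hΛ (by simp [Prod.lt_iff])
    ⟨by simpa using hx.le, ?_, by simpa using hle⟩
  exact (pos_of_mul_pos_right (hn.trans_le hle) hx.le).le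

lemma mem_rectangle_or_mem_square {a b : ℝ} (hn : 0 ≤ n) (ha : 0 < a) (hax : a ≤ q.1)
    (hxb : q.1 ≤ b) (hxy : n ≤ q.1 * q.2) (hleft : (q.1 - 1) * q.2 ≤ n)
    (hdown : q.1 * (q.2 - 1) ≤ n) :
    q ∈ Set.Icc a b ×ˢ Set.Icc (n / b) (n / a) ∨
      q ∈ Set.Icc a (a + 1) ×ˢ Set.Icc (n / a) (n / a + 1) := by
  have hx : 0 < q.1 := ha.trans_le hax
  have hy : 0 ≤ q.2 := nonneg_of_mul_nonneg_right (hn.trans hxy) hx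
  rcases le_or_gt q.2 (n / a) with hbelow | habove
  · refine .inl ⟨⟨hax, hxb⟩, ?_, hbelow⟩
    calc n / b ≤ n / q.1 := by gcongr
      _ ≤ q.2 := (div_le_iff₀' hx).mpr hxy
  · have hright : q.1 ≤ a + 1 := by
      have hlt : n < a * q.2 := (div_lt_iff₀' ha).mp habove
      have hle : q.1 - 1 ≤ a := (lt_of_mul_lt_mul_right (hleft.trans_lt hlt) hy).le
      linarith
    have htop : q.2 - 1 ≤ n / a :=
      calc q.2 - 1 ≤ n / q.1 := (le_div_iff₀' hx).mpr hdown
        _ ≤ n / a := by gcongr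
    exact .inr ⟨⟨hax, hright⟩, habove.le, by linarith⟩

end Hyperbola

section Covolume

variable {v w a b u p q q' : ℝ × ℝ}

lemma coe_closure_pair_eq_latticeOf (v w : ℝ × ℝ) :
    (AddSubgroup.closure {v, w} : Set (ℝ × ℝ)) = latticeOf v w := by
  ext u
  simp only [SetLike.mem_coe, AddSubgroup.mem_closure_pair, latticeOf, Set.mem_ofPred_eq,
    Int.cast_smul_eq_zsmul, eq_comm]

lemma exists_detOf_eq_natCast_mul (ha : a ∈ latticeOf v w) (hb : b ∈ latticeOf v w) :
    ∃ m : ℕ, detOf a b = m * detOf v w := by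
  obtain ⟨r, s, rfl⟩ := ha
  obtain ⟨r', s', rfl⟩ := hb
  refine ⟨(r * s' - s * r').natAbs, ?_⟩
  rw [Nat.cast_natAbs, Int.cast_abs, detOf, detOf, ← abs_mul]
  congr 1
  simp only [Prod.fst_add, Prod.snd_add, Prod.smul_fst, Prod.smul_snd, smul_eq_mul]
  push_cast
  ring

lemma detOf_le_detOf (ha : a ∈ latticeOf v w) (hb : b ∈ latticeOf v w) (hab : detOf a b ≠ 0) :
    detOf v w ≤ detOf a b := by
  obtain ⟨m, hm⟩ := exists_detOf_eq_natCast_mul ha hb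
  have hm0 : m ≠ 0 := by
    rintro rfl
    simp [hm] at hab
  rw [hm]
  exact le_mul_of_one_le_left (abs_nonneg _) (mod_cast Nat.one_le_iff_ne_zero.mpr hm0)

lemma one_zero_mem_intLattice : ((1, 0) : ℝ × ℝ) ∈ intLattice := ⟨1, 0, by simp⟩

lemma zero_one_mem_intLattice : ((0, 1) : ℝ × ℝ) ∈ intLattice := ⟨0, 1, by simp⟩

lemma detOf_pos_of_intLattice_subset (hsup : intLattice ⊆ latticeOf v w) : 0 < detOf v w := by
  obtain ⟨m, hm⟩ := exists_detOf_eq_natCast_mul (hsup one_zero_mem_intLattice)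
    (hsup zero_one_mem_intLattice)
  refine (abs_nonneg _).lt_of_ne' fun h => ?_
  simp [h, detOf] at hm

lemma detOf_le_abs_fst (hΛ : ((0, 1) : ℝ × ℝ) ∈ latticeOf v w)
    (hu : u ∈ latticeOf v w) (hu0 : u.1 ≠ 0) : detOf v w ≤ |u.1| := by
  have hdet : detOf u (0, 1) = |u.1| := by simp [detOf]
  rw [← hdet]
  exact detOf_le_detOf hu hΛ (by rwa [hdet, abs_ne_zero])

lemma detOf_le_abs_snd (hΛ : ((1, 0) : ℝ × ℝ) ∈ latticeOf v w)
    (hu : u ∈ latticeOf v w) (hu0 : u.2 ≠ 0) : detOf v w ≤ |u.2| := by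
  have hdet : detOf (1, 0) u = |u.2| := by simp [detOf]
  rw [← hdet]
  exact detOf_le_detOf hΛ hu (by rwa [hdet, abs_ne_zero])

lemma detOf_le_fst (hΛ : ((0, 1) : ℝ × ℝ) ∈ latticeOf v w)
    (hq : q ∈ translateSet p (latticeOf v w)) (hq' : q' ∈ translateSet p (latticeOf v w))
    (hnonneg : 0 ≤ q'.1) (hlt : q'.1 < q.1) : detOf v w ≤ q.1 := by
  rw [← coe_closure_pair_eq_latticeOf] at hq hq'
  have hu : q - q' ∈ latticeOf v w :=
    coe_closure_pair_eq_latticeOf v w ▸ sub_mem_of_mem_translateSet hq hq'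
  calc detOf v w ≤ |q.1 - q'.1| := detOf_le_abs_fst hΛ hu (sub_pos.mpr hlt).ne'
    _ = q.1 - q'.1 := abs_of_pos (sub_pos.mpr hlt)
    _ ≤ q.1 := sub_le_self _ hnonneg

lemma detOf_le_snd (hΛ : ((1, 0) : ℝ × ℝ) ∈ latticeOf v w)
    (hq : q ∈ translateSet p (latticeOf v w)) (hq' : q' ∈ translateSet p (latticeOf v w))
    (hnonneg : 0 ≤ q'.2) (hlt : q'.2 < q.2) : detOf v w ≤ q.2 := by
  rw [← coe_closure_pair_eq_latticeOf] at hq hq'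
  have hu : q - q' ∈ latticeOf v w :=
    coe_closure_pair_eq_latticeOf v w ▸ sub_mem_of_mem_translateSet hq hq'
  calc detOf v w ≤ |q.2 - q'.2| := detOf_le_abs_snd hΛ hu (sub_pos.mpr hlt).ne'
    _ = q.2 - q'.2 := abs_of_pos (sub_pos.mpr hlt)
    _ ≤ q.2 := sub_le_self _ hnonneg

end Covolume

lemma zpow_le_iff_le_floor_logb {b x : ℝ} (hb : 1 < b) (hx : 0 < x) {i : ℤ} :
    b ^ i ≤ x ↔ i ≤ ⌊Real.logb b x⌋ := by
  rw [Int.le_floor, Real.le_logb_iff_rpow_le hb hx, Real.rpow_intCast]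

theorem statement7_general {n k : ℝ} {p v w q : ℝ × ℝ} (hn : 0 < n)
    (hsup : intLattice ⊆ latticeOf v w) (hk : 1 < k)
    (hq : q ∈ (convexHull ℝ (Hset n ∩ translateSet p (latticeOf v w))).extremePoints ℝ)
    (hleft : ∃ q' ∈ Hset n ∩ translateSet p (latticeOf v w), q'.1 < q.1)
    (hbelow : ∃ q' ∈ Hset n ∩ translateSet p (latticeOf v w), q'.2 < q.2) :
    ∃ i : ℤ, ⌊Real.logb k (detOf v w)⌋ ≤ i ∧ i ≤ ⌊Real.logb k (n / detOf v w + 1)⌋ ∧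
      (q ∈ Set.Icc (k ^ i) (k ^ (i + 1)) ×ˢ Set.Icc (n / k ^ (i + 1)) (n / k ^ i) ∨
       q ∈ Set.Icc (k ^ i) (k ^ i + 1) ×ˢ Set.Icc (n / k ^ i) (n / k ^ i + 1)) := by
  obtain ⟨hqH, hqΛ⟩ := extremePoints_convexHull_subset hq
  obtain ⟨hx, hy⟩ := pos_of_mem_Hset hn hqH
  have hd : 0 < detOf v w := detOf_pos_of_intLattice_subset hsup
  have hdx : detOf v w ≤ q.1 :=
    let ⟨_, ⟨hqH', hqΛ'⟩, hlt⟩ := hleft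
    detOf_le_fst (hsup zero_one_mem_intLattice) hqΛ hqΛ' hqH'.1 hlt
  have hdy : detOf v w ≤ q.2 :=
    let ⟨_, ⟨hqH', hqΛ'⟩, hlt⟩ := hbelow
    detOf_le_snd (hsup one_zero_mem_intLattice) hqΛ hqΛ' hqH'.2.1 hlt
  rw [← coe_closure_pair_eq_latticeOf] at hq hsup
  have hxy_left : (q.1 - 1) * q.2 < n :=
    sub_one_mul_lt_of_mem_extremePoints hn (hsup one_zero_mem_intLattice) hq
  have hxy_down : q.1 * (q.2 - 1) < n :=
    mul_sub_one_lt_of_mem_extremePoints hn (hsup zero_one_mem_intLattice) hq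
  have hxd : q.1 ≤ n / detOf v w + 1 := sub_le_iff_le_add.mp <|
    calc q.1 - 1 ≤ n / q.2 := (le_div_iff₀ hy).mpr hxy_left.le
      _ ≤ n / detOf v w := by gcongr
  have hlo : k ^ ⌊Real.logb k q.1⌋ ≤ q.1 := (zpow_le_iff_le_floor_logb hk hx).mpr le_rfl
  have hhi : q.1 < k ^ (⌊Real.logb k q.1⌋ + 1) :=
    lt_of_not_ge fun h => (Int.lt_succ _).not_ge ((zpow_le_iff_le_floor_logb hk hx).mp h)
  exact ⟨⌊Real.logb k q.1⌋, Int.floor_le_floor (Real.logb_le_logb_of_le hk hd hdx),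
    Int.floor_le_floor (Real.logb_le_logb_of_le hk hx hxd),
    mem_rectangle_or_mem_square hn.le (zpow_pos (one_pos.trans hk) _) hlo hhi.le hqH.2.2
      hxy_left.le hxy_down.le⟩

/-- Every vertex `q` of `conv(H_n ∩ (p + Λ))` other than the vertex of smallest
`x`-coordinate and the vertex of smallest `y`-coordinate lies in some rectangle
`R_i = [kⁱ, kⁱ⁺¹] × [n/kⁱ⁺¹, n/kⁱ]` or unit square `U_i = (kⁱ, n/kⁱ) + [0,1]²` with
`⌊log_k (det Λ)⌋ ≤ i ≤ ⌊log_k (n/det Λ + 1)⌋`. -/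
theorem statement7 (n : ℝ) (hn : 0 < n) (p v w : ℝ × ℝ)
    (hvw : v.1 * w.2 - v.2 * w.1 ≠ 0)
    (hsup : intLattice ⊆ latticeOf v w)
    (k : ℝ) (hk : 2 ≤ k)
    (q : ℝ × ℝ)
    (hq : q ∈ Set.extremePoints ℝ
        (convexHull ℝ (Hset n ∩ translateSet p (latticeOf v w))))
    (hnotminx : ∃ q' ∈ Set.extremePoints ℝ
        (convexHull ℝ (Hset n ∩ translateSet p (latticeOf v w))), q'.1 < q.1)
    (hnotminy : ∃ q' ∈ Set.extremePoints ℝ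
        (convexHull ℝ (Hset n ∩ translateSet p (latticeOf v w))), q'.2 < q.2) :
    ∃ i : ℤ, ⌊Real.logb k (detOf v w)⌋ ≤ i ∧ i ≤ ⌊Real.logb k (n / detOf v w + 1)⌋ ∧
      (q ∈ Set.Icc (k ^ i) (k ^ (i + 1)) ×ˢ Set.Icc (n / k ^ (i + 1)) (n / k ^ i) ∨
       q ∈ Set.Icc (k ^ i) (k ^ i + 1) ×ˢ Set.Icc (n / k ^ i) (n / k ^ i + 1)) := by
  exact statement7_general hn hsup (one_lt_two.trans_le hk) hq
    (hnotminx.imp fun _ h => h.imp_left (extremePoints_convexHull_subset ·))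
    (hnotminy.imp fun _ h => h.imp_left (extremePoints_convexHull_subset ·))

end
end

section
/- Let n ∈ ℝ_{>0}, p ∈ ℝ², and let Γ be a vertical shear lattice. Then each of the ⌊n^{1/3}⌋ leftmost vertical lines of p+Γ that intersect the hyperbola xy = n in the open positive quadrant contains a vertex of conv(H_n ∩ (p+Γ)). -/
/-!
Let `x = c` be one of the lines in question. Consecutive lines of `p + Γ` are at distance `1`, so
exactly `⌈c⌉ - 1` of them lie strictly between `0` and `c`. This number is less than
`⌊n ^ (1 / 3)⌋`, so `c ≤ n ^ (1 / 3)`, that is `c ^ 3 ≤ n`.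

The lowest lattice point `P` of `H_n` on `x = c` lies less than `1` above the hyperbola point
`(c, n / c)`. The linear functional `y + (n / c ^ 2) x`, whose level line through `(c, n / c)` is
tangent to the hyperbola, grows by `n t ^ 2 / (c ^ 2 x) ≥ c t ^ 2 / x` from `(c, n / c)` to the
hyperbola point of abscissa `x = c + t`. This is more than `1` for `t ≤ -1` but may fall just short
of `1` for `t ≥ 1`; adding `x / c` to the functional makes the growth at least `1` in both cases.
So `P` is the unique minimiser of the tilted functional on `H_n ∩ (p + Γ)`, which makes it extreme
in the convex hull.
-/

noncomputable section

section ExtremePoints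

variable {𝕜 E : Type*} [Field 𝕜] [LinearOrder 𝕜] [IsStrictOrderedRing 𝕜] [AddCommGroup E]
  [Module 𝕜 E]

lemma convex_insert_setOf_lt (F : E →ₗ[𝕜] 𝕜) (P : E) :
    Convex 𝕜 (insert P {q | F P < F q}) := by
  rw [convex_iff_pairwise_pos]
  intro x hx y hy hxy a b ha hb hab
  right
  have hle : ∀ q ∈ insert P {q | F P < F q}, F P ≤ F q := by
    rintro q (rfl | hq)
    exacts [le_rfl, le_of_lt hq]
  have hlt : F P < F x ∨ F P < F y := by
    rcases hx with rfl | hx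
    · exact Or.inr (hy.resolve_left hxy.symm)
    · exact Or.inl hx
  calc F P = a * F P + b * F P := by rw [← add_mul, hab, one_mul]
    _ < a * F x + b * F y := by
      rcases hlt with h | h
      · exact add_lt_add_of_lt_of_le (mul_lt_mul_of_pos_left h ha)
          (mul_le_mul_of_nonneg_left (hle y hy) hb.le)
      · exact add_lt_add_of_le_of_lt (mul_le_mul_of_nonneg_left (hle x hx) ha.le)
          (mul_lt_mul_of_pos_left h hb)
    _ = F (a • x + b • y) := by simp

lemma mem_extremePoints_convexHull_of_forall_lt {S : Set E} {P : E} (hP : P ∈ S)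
    (F : E →ₗ[𝕜] 𝕜) (hF : ∀ q ∈ S, q ≠ P → F P < F q) :
    P ∈ (convexHull 𝕜 S).extremePoints 𝕜 := by
  have hS : S ⊆ insert P {q | F P < F q} := fun q hq => or_iff_not_imp_left.2 (hF q hq)
  have hhull : convexHull 𝕜 S \ {P} ⊆ {q | F P < F q} :=
    Set.sdiff_singleton_subset_iff.2 (convexHull_min hS (convex_insert_setOf_lt F P))
  rw [(convex_convexHull 𝕜 S).mem_extremePoints_iff_mem_sdiff_convexHull_sdiff]
  exact ⟨subset_convexHull 𝕜 S hP, fun h =>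
    lt_irrefl (F P) (convexHull_min hhull (convex_halfSpace_gt F.isLinear (F P)) h)⟩

end ExtremePoints

lemma ncard_Ioo_inter_range_add_intCast {R : Type*} [Ring R] [LinearOrder R]
    [IsStrictOrderedRing R] [FloorRing R] (a b r : R) :
    (Set.Ioo a b ∩ Set.range fun k : ℤ => r + k).ncard = (⌈b - r⌉ - ⌊a - r⌋ - 1).toNat := by
  have hpre : (fun k : ℤ => r + (k : R)) ⁻¹' Set.Ioo a b = Set.Ioo ⌊a - r⌋ ⌈b - r⌉ := by
    rw [← Int.preimage_Ioo, ← Set.preimage_const_add_Ioo]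
    rfl
  have hinj : Function.Injective fun k : ℤ => r + (k : R) :=
    (add_right_injective r).comp Int.cast_injective
  rw [← Set.image_preimage_eq_inter_range, hpre, Set.ncard_image_of_injective _ hinj,
    ← Finset.coe_Ioo, Set.ncard_coe_finset, Int.card_Ioo]

lemma one_le_tilted_tangent_gap {𝕜 : Type*} [Field 𝕜] [LinearOrder 𝕜] [IsStrictOrderedRing 𝕜]
    {n c x : 𝕜} (hc : 0 < c) (hcn : c ^ 3 ≤ n) (hx : 0 < x) (hxc : 1 ≤ |x - c|) :
    1 ≤ n / x - n / c + (n / c ^ 2 + 1 / c) * (x - c) := by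
  have hsq : 1 ≤ (x - c) ^ 2 := (one_le_sq_iff_one_le_abs _).2 hxc
  have hnum : 0 ≤ n * (x - c) ^ 2 + c * (x - c) * x - c ^ 2 * x :=
    calc 0 ≤ c ^ 3 * ((x - c) ^ 2 - 1) + c * (x - c) ^ 2 :=
          add_nonneg (mul_nonneg (by positivity) (sub_nonneg.2 hsq)) (by positivity)
      _ = c ^ 3 * (x - c) ^ 2 + c * (x - c) * x - c ^ 2 * x := by ring
      _ ≤ n * (x - c) ^ 2 + c * (x - c) * x - c ^ 2 * x := by gcongr
  have hgap : n / x - n / c + (n / c ^ 2 + 1 / c) * (x - c) - 1 =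
      (n * (x - c) ^ 2 + c * (x - c) * x - c ^ 2 * x) / (c ^ 2 * x) := by
    field_simp
    ring
  exact sub_nonneg.1 (hgap ▸ div_nonneg hnum (by positivity))

lemma mk_mem_Hset_iff {n x y : ℝ} (hn : 0 ≤ n) (hx : 0 < x) : (x, y) ∈ Hset n ↔ n / x ≤ y := by
  rw [div_le_iff₀' hx]
  exact ⟨fun h => h.2.2, fun h => ⟨hx.le, nonneg_of_mul_nonneg_right (hn.trans h) hx, h⟩⟩

lemma fst_pos_of_mem_Hset {n : ℝ} (hn : 0 < n) {q : ℝ × ℝ} (hq : q ∈ Hset n) : 0 < q.1 :=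
  pos_of_mul_pos_left (hn.trans_le hq.2.2) hq.2.1

/-- The linear functional exposing the lowest point of `H_n` on the line `x = c`. The coefficient
`n / c ^ 2` makes it constant along the tangent to the hyperbola at `(c, n / c)`; `1 / c` is the
tilt. -/
def tiltedTangent (n c : ℝ) : ℝ × ℝ →ₗ[ℝ] ℝ :=
  LinearMap.snd ℝ ℝ ℝ + (n / c ^ 2 + 1 / c) • LinearMap.fst ℝ ℝ ℝ

lemma tiltedTangent_apply (n c : ℝ) (q : ℝ × ℝ) :
    tiltedTangent n c q = q.2 + (n / c ^ 2 + 1 / c) * q.1 :=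
  rfl

lemma mk_mem_extremePoints_convexHull_Hset_inter {n c m : ℝ} {Λ : Set (ℝ × ℝ)} (hc : 0 < c)
    (hcn : c ^ 3 ≤ n) (hsep : ∀ q ∈ Λ, q.1 ≠ c → 1 ≤ |q.1 - c|)
    (hm : IsLeast {y | (c, y) ∈ Λ ∧ n / c ≤ y} m) (hmlt : m < n / c + 1) :
    (c, m) ∈ (convexHull ℝ (Hset n ∩ Λ)).extremePoints ℝ := by
  have hn : 0 < n := (pow_pos hc 3).trans_le hcn
  refine mem_extremePoints_convexHull_of_forall_lt
    ⟨(mk_mem_Hset_iff hn.le hc).2 hm.1.2, hm.1.1⟩ (tiltedTangent n c) ?_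
  rintro ⟨x, y⟩ ⟨hH, hΛ⟩ hne
  simp only [tiltedTangent_apply]
  have hx : 0 < x := fst_pos_of_mem_Hset hn hH
  have hy : n / x ≤ y := (mk_mem_Hset_iff hn.le hx).1 hH
  rcases eq_or_ne x c with rfl | hxc
  · have hmy : m < y := (hm.2 ⟨hΛ, hy⟩).lt_of_ne fun h => hne (by rw [h])
    gcongr
  · have hgap := one_le_tilted_tangent_gap hc hcn hx (hsep _ hΛ hxc)
    rw [mul_sub] at hgap
    linarith

/-- The translate `p + Γ` of the vertical shear lattice `Γ` generated by `(1, s)` and `(0, 1)`. -/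
abbrev shearLatticeTranslate (p : ℝ × ℝ) (s : ℝ) : Set (ℝ × ℝ) :=
  translateSet p (latticeOf (1, s) (0, 1))

section ShearLattice

variable {p : ℝ × ℝ} {s c : ℝ}

lemma mem_shearLatticeTranslate_iff {q : ℝ × ℝ} :
    q ∈ shearLatticeTranslate p s ↔ ∃ a b : ℤ, q.1 = p.1 + a ∧ q.2 = p.2 + a * s + b := by
  have hcoord (a b : ℤ) : p + ((a : ℝ) • (1, s) + (b : ℝ) • (0, 1)) = q ↔
      q.1 = p.1 + a ∧ q.2 = p.2 + a * s + b := by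
    rw [eq_comm, Prod.ext_iff]
    simp [add_assoc]
  constructor
  · rintro ⟨_, ⟨a, b, rfl⟩, h⟩
    exact ⟨a, b, (hcoord a b).1 h⟩
  · rintro ⟨a, b, h⟩
    exact ⟨_, ⟨a, b, rfl⟩, (hcoord a b).2 h⟩

lemma exists_mem_shearLatticeTranslate_fst_eq_iff :
    (∃ q ∈ shearLatticeTranslate p s, q.1 = c) ↔ ∃ a : ℤ, p.1 + a = c := by
  constructor
  · rintro ⟨q, hq, rfl⟩
    obtain ⟨a, -, ha, -⟩ := mem_shearLatticeTranslate_iff.1 hq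
    exact ⟨a, ha.symm⟩
  · rintro ⟨a, rfl⟩
    exact ⟨(p.1 + a, p.2 + a * s), mem_shearLatticeTranslate_iff.2 ⟨a, 0, by simp⟩, rfl⟩

lemma one_le_abs_fst_sub_fst {q q' : ℝ × ℝ} (hq : q ∈ shearLatticeTranslate p s)
    (hq' : q' ∈ shearLatticeTranslate p s) (hne : q.1 ≠ q'.1) : 1 ≤ |q.1 - q'.1| := by
  obtain ⟨a, -, ha, -⟩ := mem_shearLatticeTranslate_iff.1 hq
  obtain ⟨a', -, ha', -⟩ := mem_shearLatticeTranslate_iff.1 hq'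
  have hsub : q.1 - q'.1 = ((a - a' : ℤ) : ℝ) := by
    rw [ha, ha']
    push_cast
    ring
  have haa' : a - a' ≠ 0 := by
    intro h
    rw [h, Int.cast_zero] at hsub
    exact hne (sub_eq_zero.1 hsub)
  rw [hsub]
  exact_mod_cast Int.one_le_abs haa'

lemma exists_isLeast_line_ge (hline : ∃ q ∈ shearLatticeTranslate p s, q.1 = c) (r : ℝ) :
    ∃ m < r + 1, IsLeast {y | (c, y) ∈ shearLatticeTranslate p s ∧ r ≤ y} m := by
  obtain ⟨a, rfl⟩ := exists_mem_shearLatticeTranslate_fst_eq_iff.1 hline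
  set z : ℝ := p.2 + a * s
  refine ⟨z + ⌈r - z⌉, by linarith [Int.ceil_lt_add_one (r - z)],
    ⟨mem_shearLatticeTranslate_iff.2 ⟨a, ⌈r - z⌉, rfl, rfl⟩, by linarith [Int.le_ceil (r - z)]⟩, ?_⟩
  rintro y ⟨hy, hry⟩
  obtain ⟨a', b, ha', hb⟩ := mem_shearLatticeTranslate_iff.1 hy
  obtain rfl : a = a' := Int.cast_injective (add_left_cancel ha')
  have hyb : y = z + b := hb
  have hceil : ⌈r - z⌉ ≤ b := Int.ceil_le.2 (by linarith)
  rw [hyb]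
  gcongr

lemma ncard_shearLatticeTranslate_lines_lt (hc : 0 < c)
    (hline : ∃ q ∈ shearLatticeTranslate p s, q.1 = c) :
    ({c' : ℝ | 0 < c' ∧ c' < c ∧ ∃ q ∈ shearLatticeTranslate p s, q.1 = c'}.ncard : ℤ) =
      ⌈c⌉ - 1 := by
  have hset : {c' : ℝ | 0 < c' ∧ c' < c ∧ ∃ q ∈ shearLatticeTranslate p s, q.1 = c'} =
      Set.Ioo 0 c ∩ Set.range fun k : ℤ => p.1 + k := by
    ext c'
    simp only [exists_mem_shearLatticeTranslate_fst_eq_iff, Set.mem_ofPred_eq, Set.mem_inter_iff,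
      Set.mem_Ioo, Set.mem_range, and_assoc]
  obtain ⟨a, rfl⟩ := exists_mem_shearLatticeTranslate_fst_eq_iff.1 hline
  have hceil : 0 < ⌈p.1 + a⌉ := Int.ceil_pos.2 hc
  rw [Int.ceil_add_intCast] at hceil
  rw [hset, ncard_Ioo_inter_range_add_intCast, add_sub_cancel_left, Int.ceil_intCast, zero_sub,
    Int.floor_neg, Int.ceil_add_intCast]
  lia

theorem exists_extremePoint_fst_eq_of_cube_le {n : ℝ} (hc : 0 < c) (hcn : c ^ 3 ≤ n)
    (hline : ∃ q ∈ shearLatticeTranslate p s, q.1 = c) :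
    ∃ q ∈ (convexHull ℝ (Hset n ∩ shearLatticeTranslate p s)).extremePoints ℝ, q.1 = c := by
  obtain ⟨m, hmlt, hm⟩ := exists_isLeast_line_ge hline (n / c)
  have hsep : ∀ q ∈ shearLatticeTranslate p s, q.1 ≠ c → 1 ≤ |q.1 - c| :=
    fun _ hq hne => one_le_abs_fst_sub_fst hq hm.1.1 hne
  exact ⟨(c, m), mk_mem_extremePoints_convexHull_Hset_inter hc hcn hsep hm hmlt, rfl⟩

end ShearLattice

/-- For a vertical shear lattice `Γ` (generated by `(1,s)` and `(0,1)`), each of the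
`⌊n^(1/3)⌋` leftmost vertical lines of `p+Γ` meeting the hyperbola `xy = n` in the open
positive quadrant (i.e. with `x`-coordinate `> 0`) contains a vertex of
`conv(H_n ∩ (p+Γ))`. -/
theorem statement11 (n : ℝ) (hn : 0 < n) (p : ℝ × ℝ) (s : ℝ)
    (cx : ℝ) (hcx : 0 < cx)
    (hline : ∃ q ∈ translateSet p (latticeOf (1, s) (0, 1)), q.1 = cx)
    (hleft : (({c' : ℝ | 0 < c' ∧ c' < cx ∧
        ∃ q ∈ translateSet p (latticeOf (1, s) (0, 1)), q.1 = c'}).ncard : ℤ) <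
      ⌊n ^ ((1 : ℝ) / 3)⌋) :
    ∃ q ∈ Set.extremePoints ℝ
        (convexHull ℝ (Hset n ∩ translateSet p (latticeOf (1, s) (0, 1)))),
      q.1 = cx := by
  have hceil : ⌈cx⌉ ≤ ⌊n ^ ((1 : ℝ) / 3)⌋ := by
    rw [ncard_shearLatticeTranslate_lines_lt hcx hline] at hleft
    lia
  have hroot : cx ≤ n ^ ((1 : ℝ) / 3) :=
    (Int.le_ceil cx).trans (Int.le_floor.1 hceil)
  have hcube : cx ^ 3 ≤ n := by
    rw [one_div, Real.le_rpow_inv_iff_of_pos hcx.le hn.le three_pos] at hroot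
    exact_mod_cast hroot
  exact exists_extremePoint_fst_eq_of_cube_le hcx hcube hline

end
end
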